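/- Let k be a differential field of characteristic zero whose field of constants C is algebraically closed, and let k ⊆ k̃ ⊆ K be differential fields such that k̃ is an algebraic field extension of k and the field of constants of K equals C. Then for every x ∈ K, x satisfies some monic linear homogeneous differential equation with coefficients in k̃ if and only if x satisfies some monic linear homogeneous differential equation with coefficients in k (that is, T(K|k̃) = T(K|k)). -/

import Mathlib

universe u

/-- A bundled differential field of characteristic zero: a field together with a derivation,
given as a raw function satisfying additivity and the Leibniz rule. -/
structure DFld : Type (u + 1) where
  carrier : Type u
  [fieldInst : Field carrier]
  [charZeroInst : CharZero carrier]
  deriv : carrier → carrier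
  deriv_add : ∀ a b, deriv (a + b) = deriv a + deriv b
  deriv_mul : ∀ a b, deriv (a * b) = deriv a * b + a * deriv b

attribute [instance] DFld.fieldInst DFld.charZeroInst

/-- The result of applying the monic linear differential operator
`∂^n + a_{n-1} ∂^{n-1} + ⋯ + a_1 ∂ + a_0` (with coefficients `a`) to `y`,
where the derivation is given by `D`. -/
def LApply {E : Type u} [Field E] (D : E → E) (n : ℕ) (a : Fin n → E) (y : E) : E :=
  D^[n] y + ∑ i : Fin n, a i * D^[(i : ℕ)] y

/-- `diffGen D k S` is the smallest differential subfield (w.r.t. the derivation `D`)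
containing the subfield `k` and the set `S`; i.e. the differential field `k⟨S⟩`. -/
def diffGen {E : Type u} [Field E] (D : E → E) (k : Subfield E) (S : Set E) : Subfield E :=
  sInf {F : Subfield E | k ≤ F ∧ S ⊆ ↑F ∧ ∀ x ∈ F, D x ∈ F}

/-- The subfield of constants of a differential subfield `k`: `{x ∈ k | D x = 0}`. -/
def constantsOf {E : Type u} [Field E] (D : Derivation ℤ E E) (k : Subfield E) : Subfield E where
  carrier := {x | x ∈ k ∧ D x = 0}
  zero_mem' := ⟨k.zero_mem, map_zero D⟩
  one_mem' := ⟨k.one_mem, D.map_one_eq_zero⟩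
  add_mem' := by
    rintro a b ⟨hak, ha0⟩ ⟨hbk, hb0⟩
    exact ⟨k.add_mem hak hbk, by rw [map_add, ha0, hb0, add_zero]⟩
  neg_mem' := by
    rintro a ⟨hak, ha0⟩
    exact ⟨k.neg_mem hak, by rw [map_neg, ha0, neg_zero]⟩
  mul_mem' := by
    rintro a b ⟨hak, ha0⟩ ⟨hbk, hb0⟩
    exact ⟨k.mul_mem hak hbk, by
      rw [Derivation.leibniz, ha0, hb0, smul_zero, smul_zero, add_zero]⟩
  inv_mem' := by
    rintro x ⟨hxk, hx0⟩
    refine ⟨k.inv_mem hxk, ?_⟩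
    by_cases h : x = 0
    · simp [h]
    · have h1 : D (x * x⁻¹) = 0 := by rw [mul_inv_cancel₀ h, D.map_one_eq_zero]
      rw [Derivation.leibniz, hx0, smul_zero, add_zero, smul_eq_mul] at h1
      exact (mul_eq_zero.mp h1).resolve_left h

/-- `F` is a Picard–Vessiot extension of `k` (inside a common differential field) for the
monic linear differential operator of order `n` with (lower-order) coefficients `a`:
both are differential subfields, the constants of `F` equal the constants of `k`,
the coefficients lie in `k`, and `F` is differentially generated over `k` by an
`n`-dimensional vector space (over the constants) of solutions. -/
def IsPVWith {E : Type u} [Field E] (D : E → E) (k F : Subfield E) (n : ℕ)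
    (a : Fin n → E) : Prop :=
  k ≤ F ∧ (∀ x ∈ k, D x ∈ k) ∧ (∀ x ∈ F, D x ∈ F) ∧
  (∀ x ∈ F, D x = 0 → x ∈ k) ∧
  (∀ i, a i ∈ k) ∧
  ∃ y : Fin n → E,
    (∀ i, y i ∈ F) ∧
    (∀ i, LApply D n a (y i) = 0) ∧
    (∀ c : Fin n → E, (∀ i, c i ∈ k ∧ D (c i) = 0) → (∑ i, c i * y i) = 0 → ∀ i, c i = 0) ∧
    diffGen D k (Set.range y) = F

/-- `F` is a Picard–Vessiot extension of `k` for some monic linear differential operator. -/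
def IsPV {E : Type u} [Field E] (D : E → E) (k F : Subfield E) : Prop :=
  ∃ (n : ℕ) (a : Fin n → E), IsPVWith D k F n a

/-- Relative version: the differential subfield `F` is a Picard–Vessiot extension
of the differential subfield `kb ≤ F`. -/
def IsPVRel {E : Type u} [Field E] (D : E → E) (kb F : Subfield E)
    (hF : ∀ x ∈ F, D x ∈ F) : Prop :=
  IsPV (fun x : ↥F => (⟨D ↑x, hF ↑x x.2⟩ : ↥F)) (Subfield.comap F.subtype kb) ⊤

/-- The ambient differential field (with derivation `D`) is a strongly normal extension of
its differential subfield `k`: it is finitely generated as a field extension of `k`, has no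
new constants, and every differential embedding over `k` into a differential field extension
`M` lands in the compositum of the image of the base copy with the constants of `M`. -/
def IsSN {E : Type u} [Field E] (D : E → E) (k : Subfield E) : Prop :=
  (∀ x ∈ k, D x ∈ k) ∧
  (∃ s : Finset E, Subfield.closure (↑k ∪ ↑s) = (⊤ : Subfield E)) ∧
  (∀ x : E, D x = 0 → x ∈ k) ∧
  ∀ (M : DFld.{u}) (ι σ : E →+* M.carrier),
    (∀ x, ι (D x) = M.deriv (ι x)) →
    (∀ x, σ (D x) = M.deriv (σ x)) →
    (∀ x ∈ k, σ x = ι x) →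
    ∀ e : E, σ e ∈ Subfield.closure (Set.range ι ∪ {m : M.carrier | M.deriv m = 0})

/-- Relative version: the differential subfield `F` is a strongly normal extension of the
differential subfield `kb ≤ F`. -/
def IsSNRel {E : Type u} [Field E] (D : E → E) (kb F : Subfield E)
    (hF : ∀ x ∈ F, D x ∈ F) : Prop :=
  IsSN (fun x : ↥F => (⟨D ↑x, hF ↑x x.2⟩ : ↥F)) (Subfield.comap F.subtype kb)

/-- `K` is a finite field extension of the subfield `M`. -/
def FinExt {E : Type u} [Field E] (M K : Subfield E) : Prop :=
  ∃ h : M ≤ K,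
    letI : Algebra ↥M ↥K := (Subfield.inclusion h).toAlgebra
    Module.Finite ↥M ↥K

/-- The transcendence degree of the subfield `K` over the subfield `k`, as the supremum of the
cardinalities of subsets of `K` that are algebraically independent over `k`. -/
noncomputable def trdegOf {E : Type u} [Field E] (k K : Subfield E) : Cardinal.{u} :=
  ⨆ s : {s : Set E // s ⊆ (K : Set E) ∧ AlgebraicIndependent ↥k (fun x : ↥s => (x : E))},
    Cardinal.mk ↥(s.1)

/-- `K` and `M` are free over `k`: every finite subset of `K` that is algebraically
independent over `k` remains algebraically independent over `M`. -/
def FreeOver {E : Type u} [Field E] (k K M : Subfield E) : Prop :=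
  ∀ s : Finset E, (↑s : Set E) ⊆ (K : Set E) →
    AlgebraicIndependent ↥k (fun x : ↥(↑s : Set E) => (x : E)) →
    AlgebraicIndependent ↥M (fun x : ↥(↑s : Set E) => (x : E))

/-- `K` is a `k`-irreducible differential field: it is a finitely generated differential field
extension of `k` of transcendence degree at least 1, and every intermediate differential field
`k ⊂ M ⊆ K` has transcendence degree `0` or `trdeg(K|k)` over `k`. -/
def IsIrred {E : Type u} [Field E] (D : E → E) (k K : Subfield E) : Prop :=
  (∃ s : Finset E, diffGen D k ↑s = K) ∧
  1 ≤ trdegOf k K ∧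
  ∀ M : Subfield E, (∀ x ∈ M, D x ∈ M) → k < M → M ≤ K →
    trdegOf k M = 0 ∨ trdegOf k M = trdegOf k K

/-- `Kf` is a `d`-solvable extension of `k`: there is a tower of differential fields starting
at (a copy of) `k`, each step being a finite algebraic extension or a Picard–Vessiot extension
for an operator of order at most `d`, whose top contains (the copy of) `Kf`. -/
def IsDSolvable {E : Type u} [Field E] (D : E → E) (k Kf : Subfield E) (d : ℕ) : Prop :=
  ∃ (Ω : DFld.{u}) (j : E →+* Ω.carrier),
    (∀ x, j (D x) = Ω.deriv (j x)) ∧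
    ∃ (r : ℕ) (T : Fin (r + 1) → Subfield Ω.carrier),
      T 0 = Subfield.map j k ∧
      Subfield.map j Kf ≤ T (Fin.last r) ∧
      (∀ i, ∀ x ∈ T i, Ω.deriv x ∈ T i) ∧
      ∀ i : Fin r,
        FinExt (T i.castSucc) (T i.succ) ∨
        ∃ n ≤ d, ∃ a : Fin n → Ω.carrier, IsPVWith Ω.deriv (T i.castSucc) (T i.succ) n a

/-- `Kn` is generated over `kb`, as a differential field with the same constants, by one
solution `z` of an inhomogeneous equation `L(y) = b` (with `L` monic over `kb` of order
`n ≤ d` and `b ∈ kb`) together with an `n`-dimensional space (over the constants) of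
solutions of `L(y) = 0`. -/
def IsPVInhomLe {E : Type u} [Field E] (D : E → E) (kb Kn : Subfield E) (d : ℕ) : Prop :=
  kb ≤ Kn ∧ (∀ x ∈ kb, D x ∈ kb) ∧ (∀ x ∈ Kn, D x ∈ Kn) ∧
  (∀ x ∈ Kn, D x = 0 → x ∈ kb) ∧
  ∃ n, n ≤ d ∧ ∃ (a : Fin n → E) (b z : E) (y : Fin n → E),
    (∀ i, a i ∈ kb) ∧ b ∈ kb ∧ z ∈ Kn ∧ (∀ i, y i ∈ Kn) ∧
    LApply D n a z = b ∧
    (∀ i, LApply D n a (y i) = 0) ∧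
    (∀ c : Fin n → E, (∀ i, c i ∈ kb ∧ D (c i) = 0) → (∑ i, c i * y i) = 0 → ∀ i, c i = 0) ∧
    diffGen D kb (insert z (Set.range y)) = Kn

/-- `Kf` is a `d⁺`-solvable extension of `k`. -/
def IsDPlusSolvable {E : Type u} [Field E] (D : E → E) (k Kf : Subfield E) (d : ℕ) : Prop :=
  ∃ (Ω : DFld.{u}) (j : E →+* Ω.carrier),
    (∀ x, j (D x) = Ω.deriv (j x)) ∧
    ∃ (r : ℕ) (T : Fin (r + 1) → Subfield Ω.carrier),
      T 0 = Subfield.map j k ∧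
      Subfield.map j Kf ≤ T (Fin.last r) ∧
      (∀ i, ∀ x ∈ T i, Ω.deriv x ∈ T i) ∧
      ∀ i : Fin r,
        FinExt (T i.castSucc) (T i.succ) ∨ IsPVInhomLe Ω.deriv (T i.castSucc) (T i.succ) d

/-- `TSet D kb K` is the set of elements of `K` annihilated by some monic linear differential
operator with coefficients in `kb`. -/
def TSet {E : Type u} [Field E] (D : E → E) (kb K : Subfield E) : Set E :=
  {x | x ∈ K ∧ ∃ (n : ℕ) (a : Fin n → E), (∀ i, a i ∈ kb) ∧ LApply D n a x = 0}

/-!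
An element `x` satisfies a monic linear differential equation over a differential field `F` exactly
when finitely many of the derivatives `x, x′, x″, …` span all of them over `F`. The finitely many
coefficients of an equation over `k̃` generate a finite separable extension `F` of `k`. This `F` is
again a differential field, so the derivatives of `x` span a finite-dimensional `F`-space, which is
finite-dimensional over `k` as well; hence some derivative of `x` is a `k`-linear combination of
the preceding ones.
-/

section Span

-- The ascending chain of the spans of the initial segments of `v` stabilizes.
theorem exists_mem_span_range_fin {R M : Type*} [Semiring R] [AddCommMonoid M] [Module R M]
    (N : Submodule R M) [IsNoetherian R N] {v : ℕ → M} (hv : ∀ i, v i ∈ N) :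
    ∃ n, v n ∈ Submodule.span R (Set.range fun i : Fin n => v i) := by
  let chain : ℕ →o Submodule R N :=
    ⟨fun n => (Submodule.span R (Set.range fun i : Fin n => v i)).comap N.subtype,
      fun m n hmn => Submodule.comap_mono <| Submodule.span_mono <|
        Set.range_subset_iff.2 fun i => ⟨i.castLE hmn, rfl⟩⟩
  obtain ⟨n, hn⟩ := monotone_stabilizes_iff_noetherian.2 ‹IsNoetherian R N› chain
  have hmem : (⟨v n, hv n⟩ : N) ∈ chain (n + 1) :=
    Submodule.subset_span ⟨Fin.last n, rfl⟩
  rw [← hn (n + 1) n.le_succ] at hmem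
  exact ⟨n, hmem⟩

variable {R A : Type*} [CommRing R] [CommRing A] [Algebra R A] {D : Derivation ℤ A A}

theorem derivation_mem_span (hR : ∀ r, D (algebraMap R A r) ∈ (algebraMap R A).range) {s : Set A}
    (hs : ∀ y ∈ s, D y ∈ Submodule.span R s) {x : A} (hx : x ∈ Submodule.span R s) :
    D x ∈ Submodule.span R s := by
  induction hx using Submodule.span_induction with
  | mem y hy => exact hs y hy
  | zero => simp
  | add y z _ _ hy hz => simpa using add_mem hy hz
  | smul r y hy hDy =>
    obtain ⟨r', hr'⟩ := hR r
    have leibniz : D (r • y) = r • D y + r' • y := by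
      rw [Algebra.smul_def, Algebra.smul_def, Algebra.smul_def, Derivation.leibniz, hr',
        smul_eq_mul, smul_eq_mul, mul_comm y]
    rw [leibniz]
    exact add_mem (Submodule.smul_mem _ r hDy) (Submodule.smul_mem _ r' hy)

theorem iterate_mem_span_of_iterate_mem_span
    (hR : ∀ r, D (algebraMap R A r) ∈ (algebraMap R A).range) {x : A} {n : ℕ}
    (hn : D^[n] x ∈ Submodule.span R (Set.range fun i : Fin n => D^[i] x)) (m : ℕ) :
    D^[m] x ∈ Submodule.span R (Set.range fun i : Fin n => D^[i] x) := by
  have hle : ∀ i ≤ n, D^[i] x ∈ Submodule.span R (Set.range fun i : Fin n => D^[i] x) := by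
    intro i hi
    obtain hi | rfl := hi.lt_or_eq
    · exact Submodule.subset_span ⟨⟨i, hi⟩, rfl⟩
    · exact hn
  induction m with
  | zero => exact hle 0 n.zero_le
  | succ m ih =>
    rw [Function.iterate_succ_apply']
    refine derivation_mem_span hR ?_ ih
    rintro _ ⟨i, rfl⟩
    rw [← Function.iterate_succ_apply' D]
    exact hle _ i.2

theorem exists_iterate_mem_span_of_finite {S : Type*} [CommRing S] [Algebra R S] [Algebra S A]
    [IsScalarTower R S A] [IsNoetherianRing R] [Module.Finite R S]
    (hS : ∀ s, D (algebraMap S A s) ∈ (algebraMap S A).range) {x : A} {n : ℕ}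
    (hn : D^[n] x ∈ Submodule.span S (Set.range fun i : Fin n => D^[i] x)) :
    ∃ m, D^[m] x ∈ Submodule.span R (Set.range fun i : Fin m => D^[i] x) := by
  let W := Submodule.span S (Set.range fun i : Fin n => D^[i] x)
  have : Module.Finite S W := Module.Finite.span_of_finite S (Set.finite_range _)
  have : Module.Finite R W := Module.Finite.trans S W
  have : IsNoetherian R (W.restrictScalars R) := isNoetherian_of_isNoetherianRing_of_finite R W
  have hW : ∀ m, D^[m] x ∈ W.restrictScalars R := iterate_mem_span_of_iterate_mem_span hS hn
  exact exists_mem_span_range_fin (v := fun m => D^[m] x) (W.restrictScalars R) hW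

end Span

theorem derivation_eq_zero_of_formallyUnramified {R S M : Type*} [CommRing R] [CommRing S]
    [Algebra R S] [Algebra.FormallyUnramified R S] [AddCommGroup M] [Module R M] [Module S M]
    [IsScalarTower R S M] (d : Derivation R S M) : d = 0 := by
  ext s
  rw [← d.liftKaehlerDifferential_comp_D, Subsingleton.elim (KaehlerDifferential.D R S s) 0,
    map_zero, Derivation.zero_apply]

-- Since `D` maps the image of `R` into `S`, it induces an `R`-linear derivation `S → A ⧸ S`.
theorem derivation_mem_of_formallyUnramified {R A : Type*} [CommRing R] [CommRing A] [Algebra R A]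
    (D : Derivation ℤ A A) (S : Subalgebra R A) [Algebra.FormallyUnramified R S]
    (hR : ∀ r, D (algebraMap R A r) ∈ S) {x : A} (hx : x ∈ S) : D x ∈ S := by
  let P : Submodule S A := LinearMap.range (Algebra.linearMap S A)
  have mem_P : ∀ {y : A}, y ∈ P ↔ y ∈ S :=
    ⟨fun ⟨s, hs⟩ => hs ▸ s.2, fun hy => ⟨⟨_, hy⟩, rfl⟩⟩
  have leibniz : ∀ s t : S, P.mkQ (D ↑(s * t)) = s • P.mkQ (D t) + t • P.mkQ (D s) :=
    fun s t => congrArg P.mkQ (D.leibniz s t)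
  have algebraMap_eq_zero : ∀ r, P.mkQ (D (algebraMap R A r)) = 0 := fun r =>
    (Submodule.Quotient.mk_eq_zero P).2 (mem_P.2 (hR r))
  let d : Derivation R S (A ⧸ P) := .mk'
    { toFun := fun s => P.mkQ (D s)
      map_add' := fun s t => by simp only [AddMemClass.coe_add, map_add]
      map_smul' := fun r s => by
        rw [Algebra.smul_def, leibniz, Subalgebra.coe_algebraMap, algebraMap_eq_zero, smul_zero,
          add_zero, algebraMap_smul, RingHom.id_apply] } leibniz
  have hdx : P.mkQ (D x) = 0 :=
    DFunLike.congr_fun (derivation_eq_zero_of_formallyUnramified d) (⟨x, hx⟩ : S)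
  exact mem_P.1 ((Submodule.Quotient.mk_eq_zero P).1 hdx)

theorem derivation_mem_of_isSeparable {k K : Type*} [Field k] [Field K] [Algebra k K]
    (D : Derivation ℤ K K) (F : IntermediateField k K) [Algebra.IsSeparable k F]
    (hk : ∀ c, D (algebraMap k K c) ∈ F) {x : K} (hx : x ∈ F) : D x ∈ F :=
  have : Algebra.FormallyUnramified k F.toSubalgebra := .of_isSeparable k F
  derivation_mem_of_formallyUnramified D F.toSubalgebra hk hx

theorem exists_lApply_eq_zero_iff {R : Type*} {E : Type u} [CommRing R] [Field E] [Algebra R E]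
    {D : E → E} {n : ℕ} {x : E} :
    (∃ a : Fin n → E, (∀ i, a i ∈ (algebraMap R E).range) ∧ LApply D n a x = 0) ↔
      D^[n] x ∈ Submodule.span R (Set.range fun i : Fin n => D^[i] x) := by
  rw [Submodule.mem_span_range_iff_exists_fun]
  constructor
  · rintro ⟨a, ha, hx⟩
    choose c hc using ha
    refine ⟨fun i => -c i, ?_⟩
    simp only [Algebra.smul_def, map_neg, hc, neg_mul, Finset.sum_neg_distrib]
    exact (eq_neg_of_add_eq_zero_left hx).symm
  · rintro ⟨c, hc⟩
    refine ⟨fun i => algebraMap R E (-c i), fun i => ⟨_, rfl⟩, ?_⟩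
    simp only [LApply, ← Algebra.smul_def, neg_smul, Finset.sum_neg_distrib, hc, add_neg_cancel]

section TSet

variable {K : Type u} [Field K]

theorem tSet_mono_left {D : K → K} {k kt : Subfield K} (h : k ≤ kt) (M : Subfield K) :
    TSet D k M ⊆ TSet D kt M :=
  fun _ ⟨hxM, n, a, ha, hx⟩ => ⟨hxM, n, a, fun i => h (ha i), hx⟩

theorem exists_lApply_eq_zero_of_isSeparable {D : Derivation ℤ K K} {k : Subfield K}
    (hk : ∀ x ∈ k, D x ∈ k) {n : ℕ} {a : Fin n → K} (ha : ∀ i, IsSeparable k (a i)) {x : K}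
    (hx : LApply D n a x = 0) :
    ∃ (m : ℕ) (b : Fin m → K), (∀ i, b i ∈ k) ∧ LApply D m b x = 0 := by
  let F := IntermediateField.adjoin k (Set.range a)
  have : FiniteDimensional k F :=
    IntermediateField.finiteDimensional_adjoin (Set.forall_mem_range.2 fun i => (ha i).isIntegral)
  have : Algebra.IsSeparable k F :=
    (IntermediateField.isSeparable_adjoin_iff_isSeparable k K).2
      (Set.forall_mem_range.2 ha)
  have hF : ∀ f : F, D (algebraMap F K f) ∈ (algebraMap F K).range := fun f =>
    ⟨⟨D f, derivation_mem_of_isSeparable D F (fun c => F.algebraMap_mem ⟨D c, hk c c.2⟩) f.2⟩, rfl⟩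
  have haF : ∀ i, a i ∈ (algebraMap F K).range := fun i =>
    ⟨⟨a i, IntermediateField.subset_adjoin k _ ⟨i, rfl⟩⟩, rfl⟩
  obtain ⟨m, hm⟩ := exists_iterate_mem_span_of_finite (R := k) hF
    (exists_lApply_eq_zero_iff.1 ⟨a, haF, hx⟩)
  obtain ⟨b, hb, hbx⟩ := exists_lApply_eq_zero_iff.2 hm
  refine ⟨m, b, fun i => ?_, hbx⟩
  obtain ⟨c, hc⟩ := hb i
  exact hc ▸ c.2

end TSet

theorem stmt6_general {K : Type u} [Field K] (D : Derivation ℤ K K) (k kt M : Subfield K)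
    (hk : ∀ x ∈ k, D x ∈ k) (h1 : k ≤ kt) (hsep : ∀ x ∈ kt, IsSeparable k x) :
    TSet D kt M = TSet D k M := by
  refine subset_antisymm ?_ (tSet_mono_left h1 M)
  rintro x ⟨hxM, n, a, ha, hx⟩
  exact ⟨hxM, exists_lApply_eq_zero_of_isSeparable hk (fun i => hsep _ (ha i)) hx⟩

/-- If `k ⊆ k̃ ⊆ K` with `k̃` algebraic over `k` and the constants of `K`
equal to the (algebraically closed) constants `C` of `k`, then `T(K|k̃) = T(K|k)`. -/
theorem stmt6 {K : Type u} [Field K] [CharZero K] (D : Derivation ℤ K K)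
    (k kt : Subfield K)
    (hk : ∀ x ∈ k, D x ∈ k) (hkt : ∀ x ∈ kt, D x ∈ kt)
    (hC : IsAlgClosed ↥(constantsOf D k))
    (h1 : k ≤ kt)
    (halg : ∀ x ∈ kt, IsAlgebraic ↥k x)
    (hconst : ∀ x : K, D x = 0 → x ∈ k) :
    TSet (⇑D) kt ⊤ = TSet (⇑D) k ⊤ :=
  stmt6_general D k kt ⊤ hk h1 fun x hx =>
    PerfectField.separable_of_irreducible (minpoly.irreducible (halg x hx).isIntegral)
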